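/- arXiv:2105.11956 — 5 statements merged into one kernel-verified Lean document; each statement's English description precedes it below -/
import Mathlib

section
/- Let A : ℝ^n → ℝ^m be a linear map with operator norm ‖A‖, let G : ℝ^k → ℝ^n be any function, let s ≤ k, and let S = {G(z) : z ∈ ℝ^k is s-sparse}. Suppose A satisfies S-REC(S, γ, δ) for some γ > 0 and δ ≥ 0. Let x ∈ ℝ^n, set y = A x, and suppose ẑ ∈ ℝ^k is s-sparse and minimizes z ↦ ‖y − A(G(z))‖₂ over s-sparse z to within additive ε ≥ 0 (i.e., ‖y − A(G(ẑ))‖₂ ≤ ‖y − A(G(z))‖₂ + ε for every s-sparse z). Then for every s-sparse z* ∈ ℝ^k, ‖G(ẑ) − x‖₂ ≤ (1 + 2‖A‖/γ)·‖G(z*) − x‖₂ + (ε + δ)/γ. -/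
/-- A vector `z ∈ ℝ^k` is `s`-sparse if at most `s` of its coordinates are nonzero. -/
def Sparse {k : ℕ} (s : ℕ) (z : EuclideanSpace ℝ (Fin k)) : Prop :=
  {i | z i ≠ 0}.ncard ≤ s

/-- Deterministic core of Theorem 1: recovery error of an approximate minimizer of the
measurement loss over `s`-sparse latent codes under S-REC. -/
theorem sdlss_deterministic_recovery
    {n m k : ℕ} (A : EuclideanSpace ℝ (Fin n) →L[ℝ] EuclideanSpace ℝ (Fin m))
    (G : EuclideanSpace ℝ (Fin k) → EuclideanSpace ℝ (Fin n))
    (s : ℕ) (hs : s ≤ k) (γ δ : ℝ) (hγ : 0 < γ) (hδ : 0 ≤ δ)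
    -- `A` satisfies S-REC(S, γ, δ) with `S = G '' {s-sparse vectors}`
    (hSREC : ∀ x₁ ∈ G '' {z | Sparse s z}, ∀ x₂ ∈ G '' {z | Sparse s z},
      γ * ‖x₁ - x₂‖ - δ ≤ ‖A (x₁ - x₂)‖)
    (x : EuclideanSpace ℝ (Fin n)) (y : EuclideanSpace ℝ (Fin m)) (hy : y = A x)
    (ε : ℝ) (hε : 0 ≤ ε)
    (zhat : EuclideanSpace ℝ (Fin k)) (hzhat : Sparse s zhat)
    (hmin : ∀ z : EuclideanSpace ℝ (Fin k), Sparse s z →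
      ‖y - A (G zhat)‖ ≤ ‖y - A (G z)‖ + ε) :
    ∀ zstar : EuclideanSpace ℝ (Fin k), Sparse s zstar →
      ‖G zhat - x‖ ≤ (1 + 2 * ‖A‖ / γ) * ‖G zstar - x‖ + (ε + δ) / γ := by
  intro zstar hz
  have h1 := hSREC _ ⟨zhat, hzhat, rfl⟩ _ ⟨zstar, hz, rfl⟩
  have h2 := hmin zstar hz
  subst hy
  have h3 : ‖A x - A (G zstar)‖ ≤ ‖A‖ * ‖G zstar - x‖ := by
    rw [← map_sub, norm_sub_rev (G zstar) x]
    exact A.le_opNorm _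
  have h4 : ‖A (G zhat - G zstar)‖ ≤ ‖A x - A (G zstar)‖ + ‖A x - A (G zhat)‖ := by
    have e : A (G zhat - G zstar) = (A x - A (G zstar)) - (A x - A (G zhat)) := by
      rw [map_sub]; abel
    rw [e]
    exact norm_sub_le _ _
  have h5 : ‖G zhat - x‖ ≤ ‖G zhat - G zstar‖ + ‖G zstar - x‖ :=
    norm_sub_le_norm_sub_add_norm_sub _ _ _
  have h6 : ‖G zhat - G zstar‖ ≤ (2 * ‖A‖ * ‖G zstar - x‖ + (ε + δ)) / γ := by
    rw [le_div_iff₀ hγ]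
    linarith
  have h7 : (1 + 2 * ‖A‖ / γ) * ‖G zstar - x‖ + (ε + δ) / γ
      = ‖G zstar - x‖ + (2 * ‖A‖ * ‖G zstar - x‖ + (ε + δ)) / γ := by ring
  linarith
end

section
/- There exist universal constants C₀, C₁, c > 0 such that the following holds. Let G : ℝ^k → ℝ^n be any function and s ≤ k, and suppose the image {G(z) : z s-sparse} is contained in a union of N linear subspaces of ℝ^n, each of dimension at most s. Let A ∈ ℝ^{m×n} be a random matrix with i.i.d. N(0, 1/m) entries, and suppose m ≥ C₀·(log N + s). Then for any fixed x ∈ ℝ^n with y = A x, with probability at least 1 − exp(−c·m) the following holds: every s-sparse ẑ that minimizes z ↦ ‖y − A(G(z))‖₂ over s-sparse z to within additive ε ≥ 0 satisfies, for every s-sparse z*, ‖G(ẑ) − x‖₂ ≤ C₁·‖G(z*) − x‖₂ + C₁·ε. -/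
open MeasureTheory ProbabilityTheory

/-- The law of an `m × n` random matrix with i.i.d. `N(0, 1/m)` entries. -/
noncomputable def gaussMatrix (m n : ℕ) : Measure (Fin m → Fin n → ℝ) :=
  Measure.pi fun _ => Measure.pi fun _ => gaussianReal 0 ((m : NNReal))⁻¹


theorem card_sep {E : Type*} [NormedAddCommGroup E] [NormedSpace ℝ E] [FiniteDimensional ℝ E]
    (s : Finset E) (hs : ∀ c ∈ s, ‖c‖ ≤ 1)
    (h : ∀ c ∈ s, ∀ d ∈ s, c ≠ d → 1/32 ≤ ‖c - d‖) : s.card ≤ 65 ^ Module.finrank ℝ E := by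
  borelize E
  let μ : Measure E := Measure.addHaar
  let δ : ℝ := (1 : ℝ) / 64
  let ρ : ℝ := (65 : ℝ) / 64
  have ρpos : 0 < ρ := by norm_num [ρ]
  set A := ⋃ c ∈ s, Metric.ball (c : E) δ with hA
  have D : Set.Pairwise (s : Set E) (Function.onFun Disjoint fun c => Metric.ball (c : E) δ) := by
    rintro c hc d hd hcd
    apply Metric.ball_disjoint_ball
    rw [dist_eq_norm]
    have := h c hc d hd hcd
    norm_num [δ]; linarith
  have A_subset : A ⊆ Metric.ball (0 : E) ρ := by
    refine Set.iUnion₂_subset fun x hx => ?_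
    apply Metric.ball_subset_ball'
    have := hs x hx
    rw [dist_zero_right]
    norm_num [δ, ρ]; linarith
  have I :
    (s.card : ENNReal) * ENNReal.ofReal (δ ^ Module.finrank ℝ E) * μ (Metric.ball 0 1) ≤
      ENNReal.ofReal (ρ ^ Module.finrank ℝ E) * μ (Metric.ball 0 1) :=
    calc
      (s.card : ENNReal) * ENNReal.ofReal (δ ^ Module.finrank ℝ E) * μ (Metric.ball 0 1) = μ A := by
        rw [hA, measure_biUnion_finset D fun c _ => measurableSet_ball]
        have I : 0 < δ := by norm_num [δ]
        simp only [μ.addHaar_ball_of_pos _ I]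
        simp only [Finset.sum_const, nsmul_eq_mul, mul_assoc]
      _ ≤ μ (Metric.ball (0 : E) ρ) := measure_mono A_subset
      _ = ENNReal.ofReal (ρ ^ Module.finrank ℝ E) * μ (Metric.ball 0 1) := by
        simp only [μ.addHaar_ball_of_pos _ ρpos]
  have J : (s.card : ENNReal) * ENNReal.ofReal (δ ^ Module.finrank ℝ E) ≤
      ENNReal.ofReal (ρ ^ Module.finrank ℝ E) :=
    (ENNReal.mul_le_mul_iff_left (Metric.measure_ball_pos _ _ zero_lt_one).ne'
      measure_ball_lt_top.ne).1 I
  have K : (s.card : ℝ) ≤ (65 : ℝ) ^ Module.finrank ℝ E := by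
    have := ENNReal.toReal_le_of_le_ofReal (pow_nonneg ρpos.le _) J
    simpa [ρ, δ, div_eq_mul_inv, mul_pow] using this
  exact mod_cast K

theorem exists_net (E : Type*) [NormedAddCommGroup E] [NormedSpace ℝ E] [FiniteDimensional ℝ E] :
    ∃ T : Finset E, T.card ≤ 65 ^ Module.finrank ℝ E ∧ (∀ t ∈ T, ‖t‖ = 1) ∧
      ∀ u : E, ‖u‖ = 1 → ∃ t ∈ T, ‖u - t‖ ≤ 1/32 := by
  classical
  let P : Finset E → Prop := fun T => (∀ t ∈ T, ‖t‖ = 1) ∧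
    ∀ c ∈ T, ∀ d ∈ T, c ≠ d → 1/32 ≤ ‖c - d‖
  have hP : ∀ T, P T → T.card ≤ 65 ^ Module.finrank ℝ E := fun T hT =>
    card_sep T (fun c hc => (hT.1 c hc).le) hT.2
  let S : Set ℕ := {k | ∃ T, P T ∧ T.card = k}
  have hne : S.Nonempty := ⟨0, ∅, by simp [P], rfl⟩
  have hb : BddAbove S := ⟨_, by rintro k ⟨T, hT, rfl⟩; exact hP T hT⟩
  obtain ⟨T, hT, hc⟩ := Nat.sSup_mem hne hb
  refine ⟨T, hP T hT, hT.1, ?_⟩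
  intro u hu
  by_contra! hcon
  have hnot : u ∉ T := fun h => by have := hcon u h; simp at this; linarith
  have : P (insert u T) := by
    refine ⟨?_, ?_⟩
    · intro t ht
      rcases Finset.mem_insert.1 ht with rfl | ht
      · exact hu
      · exact hT.1 t ht
    · intro c hc d hd hcd
      rcases Finset.mem_insert.1 hc with hc1 | hc1 <;> rcases Finset.mem_insert.1 hd with hd1 | hd1
      · exact absurd (hc1.trans hd1.symm) hcd
      · rw [hc1]; exact (hcon d hd1).le
      · rw [hd1, norm_sub_rev]; exact (hcon c hc1).le
      · exact hT.2 c hc1 d hd1 hcd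
  have h2 := le_csSup hb (⟨_, this, rfl⟩ : (insert u T).card ∈ S)
  rw [Finset.card_insert_of_notMem hnot] at h2
  omega

/-- From the net to the sphere. -/
theorem net_bound {E F : Type*} [NormedAddCommGroup E] [NormedSpace ℝ E] [FiniteDimensional ℝ E]
    [NormedAddCommGroup F] [NormedSpace ℝ F] (L : E →ₗ[ℝ] F) (T : Finset E)
    (hT : ∀ u : E, ‖u‖ = 1 → ∃ t ∈ T, ‖u - t‖ ≤ 1/32)
    (h1 : ∀ t ∈ T, ‖L t‖ ≤ 2) (h2 : ∀ t ∈ T, 1/4 ≤ ‖L t‖) (u : E) :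
    ‖L u‖ ≤ 4 * ‖u‖ ∧ ‖u‖ ≤ 8 * ‖L u‖ := by
  let M := LinearMap.toContinuousLinearMap L
  have hM : ∀ u, M u = L u := fun u => rfl
  have hb : ∀ u : E, ‖u‖ = 1 → ‖L u‖ ≤ 2 + ‖M‖ * (1/32) := by
    intro u hu
    obtain ⟨t, ht, hut⟩ := hT u hu
    have e : L u = L t + M (u - t) := by rw [hM, map_sub]; abel
    rw [e]
    refine (norm_add_le _ _).trans (add_le_add (h1 t ht) ((M.le_opNorm _).trans ?_))
    gcongr
  have hn : ‖M‖ ≤ 2 + ‖M‖ * (1/32) := by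
    refine M.opNorm_le_of_unit_norm (by positivity) (fun u hu => hb u hu)
  have hn4 : ‖M‖ ≤ 4 := by linarith
  refine ⟨(M.le_opNorm u).trans (by gcongr), ?_⟩
  by_cases hu : u = 0
  · simp [hu]
  have hu' : ‖u‖ ≠ 0 := norm_ne_zero_iff.2 hu
  obtain ⟨t, ht, hut⟩ := hT (‖u‖⁻¹ • u) (by rw [norm_smul, norm_inv, norm_norm, inv_mul_cancel₀ hu'])
  have h3 := h2 t ht
  have e : L t = L (‖u‖⁻¹ • u) - M (‖u‖⁻¹ • u - t) := by rw [hM, map_sub]; abel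
  have h4 : ‖M (‖u‖⁻¹ • u - t)‖ ≤ 4 * (1/32) :=
    (M.le_opNorm _).trans (by gcongr)
  have h5 : ‖L t‖ ≤ ‖L (‖u‖⁻¹ • u)‖ + 4 * (1/32) := by
    rw [e]; exact (norm_sub_le _ _).trans (by gcongr)
  rw [map_smul, norm_smul, norm_inv, norm_norm] at h5
  have h6 : 1/8 ≤ ‖u‖⁻¹ * ‖L u‖ := by linarith
  have hp : 0 < ‖u‖ := norm_pos_iff.2 hu
  rw [inv_mul_eq_div, le_div_iff₀ hp] at h6
  linarith

theorem row_law (n : ℕ) (v : NNReal) (u : Fin n → ℝ) (hu : ∑ j, u j ^ 2 = 1) :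
    (Measure.pi fun _ : Fin n => gaussianReal 0 v).map (fun a => ∑ j, a j * u j)
      = gaussianReal 0 v := by
  have hm : Measurable (fun a : Fin n → ℝ => ∑ j, a j * u j) := by fun_prop
  have : IsProbabilityMeasure
      ((Measure.pi fun _ : Fin n => gaussianReal 0 v).map (fun a => ∑ j, a j * u j)) :=
    Measure.isProbabilityMeasure_map hm.aemeasurable
  apply Measure.ext_of_charFun
  ext t
  rw [charFun_apply_real, integral_map hm.aemeasurable (by fun_prop)]
  have e : ∀ a : Fin n → ℝ, Complex.exp (t * ((∑ j, a j * u j : ℝ) : ℂ) * Complex.I)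
      = ∏ j, Complex.exp (((t * u j : ℝ) : ℂ) * (a j : ℂ) * Complex.I) := by
    intro a
    rw [← Complex.exp_sum]
    congr 1
    push_cast
    rw [Finset.mul_sum, Finset.sum_mul]
    refine Finset.sum_congr rfl fun j _ => by ring
  simp_rw [e]
  rw [integral_fintype_prod_eq_prod
    (f := fun j (x : ℝ) => Complex.exp (((t * u j : ℝ) : ℂ) * (x : ℂ) * Complex.I))]
  simp_rw [← charFun_apply_real, charFun_gaussianReal]
  rw [← Complex.exp_sum]
  congr 1
  have h2 : (∑ j, (u j : ℂ) ^ 2) = 1 := by exact_mod_cast hu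
  have e2 : ∀ j, (((t * u j : ℝ) : ℂ) * ((0 : ℝ) : ℂ) * Complex.I - v * ((t * u j : ℝ) : ℂ) ^ 2 / 2)
     = (- v * t ^ 2 / 2) * (u j : ℂ) ^ 2 := by intro j; push_cast; ring
  simp_rw [e2]
  rw [← Finset.mul_sum, h2]
  push_cast; ring

theorem gauss_sq (v : NNReal) (hv : v ≠ 0) (b : ℝ) (hb : 2 * b * v < 1) :
    ∫ x, Real.exp (b * x ^ 2) ∂(gaussianReal 0 v) = (√(1 - 2 * b * v))⁻¹ := by
  rw [integral_gaussianReal_eq_integral_smul hv]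
  have hv' : (0 : ℝ) < v := by exact_mod_cast pos_iff_ne_zero.2 hv
  have e : ∀ x : ℝ, gaussianPDFReal 0 v x • Real.exp (b * x ^ 2)
      = (√(2 * Real.pi * v))⁻¹ * Real.exp (-((1 - 2 * b * v) / (2 * v)) * x ^ 2) := by
    intro x
    rw [gaussianPDFReal, smul_eq_mul, mul_assoc, ← Real.exp_add]
    congr 2
    field_simp
    ring
  simp_rw [e]
  rw [integral_const_mul, integral_gaussian, ← Real.sqrt_inv, ← Real.sqrt_inv, ← Real.sqrt_mul (by positivity)]
  congr 1
  have : 0 < 1 - 2 * b * v := by linarith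
  have := Real.pi_pos
  field_simp

theorem mat_mgf (m n : ℕ) (v : NNReal) (hv : v ≠ 0) (b : ℝ) (hb : 2 * b * v < 1) (u : Fin n → ℝ)
    (hu : ∑ j, u j ^ 2 = 1) :
    ∫ A : Fin m → Fin n → ℝ, Real.exp (b * ∑ i, (∑ j, A i j * u j) ^ 2)
      ∂(Measure.pi fun _ : Fin m => Measure.pi fun _ : Fin n => gaussianReal 0 v)
      = (√(1 - 2 * b * v))⁻¹ ^ m := by
  simp_rw [Finset.mul_sum, Real.exp_sum]
  rw [integral_fintype_prod_eq_prod (𝕜 := ℝ)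
    (f := fun _ (a : Fin n → ℝ) => Real.exp (b * (∑ j, a j * u j) ^ 2))]
  have h : ∫ a : Fin n → ℝ, Real.exp (b * (∑ j, a j * u j) ^ 2)
      ∂(Measure.pi fun _ : Fin n => gaussianReal 0 v) = (√(1 - 2 * b * v))⁻¹ := by
    have hm : Measurable (fun a : Fin n → ℝ => ∑ j, a j * u j) := by fun_prop
    have h1 := integral_map (μ := Measure.pi fun _ : Fin n => gaussianReal 0 v)
      hm.aemeasurable (f := fun x : ℝ => Real.exp (b * x ^ 2)) (by fun_prop)
    rw [row_law n v u hu, gauss_sq v hv b hb] at h1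
    exact h1.symm
  rw [h]; simp

theorem mat_chernoff (m n : ℕ) (v : NNReal) (hv : v ≠ 0) (b : ℝ) (hb : 2 * b * v < 1) (u : Fin n → ℝ)
    (hu : ∑ j, u j ^ 2 = 1) (t : ℝ) :
    (Measure.pi fun _ : Fin m => Measure.pi fun _ : Fin n => gaussianReal 0 v)
      {A | b * t ≤ b * ∑ i, (∑ j, A i j * u j) ^ 2} ≤
      ENNReal.ofReal (Real.exp (-(b * t)) * (√(1 - 2 * b * v))⁻¹ ^ m) := by
  have h := mat_mgf m n v hv b hb u hu
  have hpos : 0 < 1 - 2 * b * v := by linarith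
  have hint := not_imp_comm.1 integral_undef (h.trans_ne (by positivity))
  have := mul_meas_ge_le_integral_of_nonneg (Filter.Eventually.of_forall fun A => (Real.exp_pos _).le) hint
    (Real.exp (b * t))
  rw [h] at this
  simp_rw [Real.exp_le_exp] at this
  rw [← ofReal_measureReal]
  apply ENNReal.ofReal_le_ofReal
  rw [Real.exp_neg, inv_mul_eq_div, le_div_iff₀ (Real.exp_pos _), mul_comm]
  exact this

theorem norm_sq_mat {m n : ℕ} (A : Fin m → Fin n → ℝ) (u : EuclideanSpace ℝ (Fin n)) :
    ‖Matrix.toEuclideanLin (Matrix.of A) u‖ ^ 2 = ∑ i, (∑ j, A i j * u j) ^ 2 := by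
  rw [EuclideanSpace.norm_sq_eq]
  simp [Matrix.toLpLin_apply, Matrix.mulVec, dotProduct]

theorem point_upper (m n : ℕ) (hm : m ≠ 0) (u : EuclideanSpace ℝ (Fin n)) (hu : ‖u‖ = 1) :
    gaussMatrix m n {A | ¬ ‖Matrix.toEuclideanLin (Matrix.of A) u‖ ≤ 2} ≤
      ENNReal.ofReal (Real.exp (-(m / 2))) := by
  have hu2 : ∑ j, u j ^ 2 = 1 := by
    have := EuclideanSpace.norm_sq_eq u
    rw [hu] at this; simpa using this.symm
  have hm' : (0 : ℝ) < m := by positivity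
  have hv : 2 * (m / 4 : ℝ) * (((m : NNReal)⁻¹ : NNReal) : ℝ) = 1 / 2 := by
    push_cast; field_simp; norm_num
  have h := mat_chernoff m n (m : NNReal)⁻¹ (by simpa using hm) (m / 4) (by rw [hv]; norm_num) u hu2 4
  rw [hv] at h
  refine (measure_mono ?_).trans (h.trans (ENNReal.ofReal_le_ofReal ?_))
  · intro A hA
    simp only [Set.mem_ofPred_eq, not_le] at hA ⊢
    rw [← norm_sq_mat]
    gcongr
    nlinarith
  · have e1 : Real.exp (-(m / 4 * 4 : ℝ)) = Real.exp (-1) ^ m := by rw [← Real.exp_nat_mul]; congr 1; ring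
    have e2 : Real.exp (-(m / 2 : ℝ)) = Real.exp (-(1/2)) ^ m := by rw [← Real.exp_nat_mul]; congr 1; ring
    rw [e1, e2, ← mul_pow]
    gcongr
    rw [← div_eq_mul_inv, div_le_iff₀ (by norm_num)]
    have : Real.exp (-1/2) ≤ √(1 - 1/2) := by
      apply Real.le_sqrt_of_sq_le
      rw [← Real.exp_nat_mul]
      have := Real.exp_one_gt_d9
      have : Real.exp (((2 : ℕ) : ℝ) * (-1/2)) = (Real.exp 1)⁻¹ := by rw [← Real.exp_neg]; norm_num
      rw [this, inv_le_comm₀ (Real.exp_pos _) (by norm_num)]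
      norm_num; linarith
    calc Real.exp (-1) = Real.exp (-(1/2)) * Real.exp (-1/2) := by rw [← Real.exp_add]; norm_num
      _ ≤ _ := by gcongr

theorem point_lower (m n : ℕ) (hm : m ≠ 0) (u : EuclideanSpace ℝ (Fin n)) (hu : ‖u‖ = 1) :
    gaussMatrix m n {A | ¬ 1 / 4 ≤ ‖Matrix.toEuclideanLin (Matrix.of A) u‖} ≤
      ENNReal.ofReal (Real.exp (-(m / 2))) := by
  have hu2 : ∑ j, u j ^ 2 = 1 := by
    have := EuclideanSpace.norm_sq_eq u
    rw [hu] at this; simpa using this.symm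
  have hm' : (0 : ℝ) < m := by positivity
  have hv : 2 * (-(3 / 2 * m) : ℝ) * (((m : NNReal)⁻¹ : NNReal) : ℝ) = -3 := by
    push_cast; field_simp
  have h := mat_chernoff m n (m : NNReal)⁻¹ (by simpa using hm) (-(3 / 2 * m)) (by rw [hv]; norm_num)
    u hu2 (1/16)
  rw [hv] at h
  refine (measure_mono ?_).trans (h.trans (ENNReal.ofReal_le_ofReal ?_))
  · intro A hA
    simp only [Set.mem_ofPred_eq, not_le] at hA ⊢
    rw [← norm_sq_mat]
    have h0 := norm_nonneg (Matrix.toEuclideanLin (Matrix.of A) u)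
    have : ‖Matrix.toEuclideanLin (Matrix.of A) u‖ ^ 2 ≤ 1/16 := by nlinarith
    nlinarith
  · have e1 : Real.exp (-(-(3 / 2 * m) * (1/16) : ℝ)) = Real.exp (3/32) ^ m := by
      rw [← Real.exp_nat_mul]; congr 1; ring
    have e2 : Real.exp (-(m / 2 : ℝ)) = Real.exp (-(1/2)) ^ m := by rw [← Real.exp_nat_mul]; congr 1; ring
    rw [e1, e2, ← mul_pow]
    have e4 : √(1 - -3 : ℝ) = 2 := by
      rw [show (1 - -3 : ℝ) = 2 ^ 2 by norm_num]; exact Real.sqrt_sq (by norm_num)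
    rw [e4]
    gcongr
    rw [← div_eq_mul_inv, div_le_iff₀ (by norm_num)]
    have : Real.exp (19/32) ≤ 2 := by
      rw [← Real.le_log_iff_exp_le (by norm_num)]
      have := Real.log_two_gt_d9
      linarith
    calc Real.exp (3/32) = Real.exp (-(1/2)) * Real.exp (19/32) := by rw [← Real.exp_add]; norm_num
      _ ≤ _ := by gcongr

theorem subspace_bad (m n d : ℕ) (hm : m ≠ 0) (W : Submodule ℝ (EuclideanSpace ℝ (Fin n)))
    (hW : Module.finrank ℝ W ≤ d) :
    gaussMatrix m n {A | ¬ ∀ u ∈ W, ‖Matrix.toEuclideanLin (Matrix.of A) u‖ ≤ 4 * ‖u‖ ∧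
      ‖u‖ ≤ 8 * ‖Matrix.toEuclideanLin (Matrix.of A) u‖} ≤
      ENNReal.ofReal (65 ^ d * (2 * Real.exp (-(m / 2)))) := by
  obtain ⟨T, hc, h1, hT⟩ := exists_net W
  have hsub : {A : Fin m → Fin n → ℝ | ¬ ∀ u ∈ W, ‖Matrix.toEuclideanLin (Matrix.of A) u‖ ≤ 4 * ‖u‖ ∧
      ‖u‖ ≤ 8 * ‖Matrix.toEuclideanLin (Matrix.of A) u‖} ⊆
      ⋃ t ∈ T, ({A | ¬ ‖Matrix.toEuclideanLin (Matrix.of A) (t : EuclideanSpace ℝ (Fin n))‖ ≤ 2} ∪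
        {A | ¬ 1 / 4 ≤ ‖Matrix.toEuclideanLin (Matrix.of A) (t : EuclideanSpace ℝ (Fin n))‖}) := by
    intro A hA
    by_contra hcon
    simp only [Set.mem_iUnion, Set.mem_union, Set.mem_ofPred_eq, not_exists, not_or, not_not] at hcon
    apply hA
    intro u hu
    exact net_bound ((Matrix.toEuclideanLin (Matrix.of A)).comp W.subtype) T hT
      (fun t ht => (hcon t ht).1) (fun t ht => (hcon t ht).2) ⟨u, hu⟩
  refine (measure_mono hsub).trans ((measure_biUnion_finset_le _ _).trans ?_)
  have hb : ∀ t ∈ T, gaussMatrix m n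
      ({A | ¬ ‖Matrix.toEuclideanLin (Matrix.of A) (t : EuclideanSpace ℝ (Fin n))‖ ≤ 2} ∪
        {A | ¬ 1 / 4 ≤ ‖Matrix.toEuclideanLin (Matrix.of A) (t : EuclideanSpace ℝ (Fin n))‖})
      ≤ ENNReal.ofReal (2 * Real.exp (-(m / 2))) := by
    intro t ht
    have h1t : ‖(t : EuclideanSpace ℝ (Fin n))‖ = 1 := h1 t ht
    rw [two_mul, ENNReal.ofReal_add (Real.exp_pos _).le (Real.exp_pos _).le]
    exact (measure_union_le _ _).trans
      (add_le_add (point_upper m n hm t h1t) (point_lower m n hm t h1t))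
  refine (Finset.sum_le_sum hb).trans ?_
  rw [Finset.sum_const, ← ENNReal.ofReal_nsmul, nsmul_eq_mul]
  apply ENNReal.ofReal_le_ofReal
  gcongr
  have : T.card ≤ 65 ^ d := hc.trans (Nat.pow_le_pow_right (by norm_num) hW)
  exact_mod_cast this

theorem final_num (s N m : ℕ) (hs : 1 ≤ s) (hN : 1 ≤ N) (h : (m : ℝ) ≥ 44 * (Real.log N + s)) :
    (N : ℝ) * (65 ^ (s + 1) * (2 * Real.exp (-(m / 2)))) ≤ Real.exp (-(1 / 4) * m) := by
  have hN' : (0 : ℝ) < N := by exact_mod_cast hN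
  have hs' : (1 : ℝ) ≤ s := by exact_mod_cast hs
  have hl : 0 ≤ Real.log N := Real.log_nonneg (by exact_mod_cast hN)
  have h2 : (2 : ℝ) ≤ Real.exp 1 := by have := Real.exp_one_gt_d9; linarith
  have h65 : (65 : ℝ) ≤ Real.exp 5 := by
    have e : Real.exp 5 = Real.exp 1 ^ 5 := by rw [← Real.exp_nat_mul]; norm_num
    rw [e]
    calc (65 : ℝ) ≤ 2.7 ^ 5 := by norm_num
      _ ≤ _ := by gcongr; have := Real.exp_one_gt_d9; linarith
  calc (N : ℝ) * (65 ^ (s + 1) * (2 * Real.exp (-(m / 2))))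
      ≤ Real.exp (Real.log N) * (Real.exp 5 ^ (s + 1) * (Real.exp 1 * Real.exp (-(m / 2)))) := by
        rw [Real.exp_log hN']; gcongr
    _ = Real.exp (Real.log N + (((s + 1 : ℕ) : ℝ) * 5 + (1 + -(m / 2)))) := by
        rw [← Real.exp_nat_mul, ← Real.exp_add, ← Real.exp_add, ← Real.exp_add]
    _ ≤ _ := by
        apply Real.exp_le_exp.2
        push_cast
        linarith

/-- Theorem 1: with a Gaussian sensing matrix and `m ≳ log N + s` measurements, an
approximate minimizer of the measurement loss over `s`-sparse latent codes recovers `x`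
up to a constant times the representation error, with high probability. -/
theorem sdlss_sample_complexity_recovery :
    ∃ C₀ C₁ c : ℝ, 0 < C₀ ∧ 0 < C₁ ∧ 0 < c ∧
      ∀ (n k s N m : ℕ)
        (G : EuclideanSpace ℝ (Fin k) → EuclideanSpace ℝ (Fin n)), s ≤ k →
        ∀ V : Fin N → Submodule ℝ (EuclideanSpace ℝ (Fin n)),
          (∀ i, Module.finrank ℝ (V i) ≤ s) →
          (G '' {z | Sparse s z} ⊆ ⋃ i, (V i : Set (EuclideanSpace ℝ (Fin n)))) →
          (m : ℝ) ≥ C₀ * (Real.log N + s) →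
          ∀ x : EuclideanSpace ℝ (Fin n),
            ENNReal.ofReal (1 - Real.exp (-c * m)) ≤
              gaussMatrix m n {A | ∀ ε : ℝ, 0 ≤ ε →
                ∀ zhat : EuclideanSpace ℝ (Fin k), Sparse s zhat →
                  (∀ z : EuclideanSpace ℝ (Fin k), Sparse s z →
                    ‖Matrix.toEuclideanLin (Matrix.of A) x
                        - Matrix.toEuclideanLin (Matrix.of A) (G zhat)‖ ≤
                      ‖Matrix.toEuclideanLin (Matrix.of A) x
                        - Matrix.toEuclideanLin (Matrix.of A) (G z)‖ + ε) →
                  ∀ zstar : EuclideanSpace ℝ (Fin k), Sparse s zstar →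
                    ‖G zhat - x‖ ≤ C₁ * ‖G zstar - x‖ + C₁ * ε} := by
  refine ⟨44, 32, 1 / 4, by norm_num, by norm_num, by norm_num, ?_⟩
  intro n k s N m G hsk V hV hG hm x
  have hprob : IsProbabilityMeasure (gaussMatrix m n) := by
    unfold gaussMatrix; infer_instance
  have hGV : ∀ z, Sparse s z → ∃ i, G z ∈ V i := by
    intro z hz
    simpa using hG ⟨z, hz, rfl⟩
  have hN : 1 ≤ N := by
    obtain ⟨i, -⟩ := hGV 0 (by simp [Sparse])
    exact Nat.one_le_iff_ne_zero.2 (fun h => by subst h; exact i.elim0)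
  rcases Nat.eq_zero_or_pos s with hs | hs
  · have hz : ∀ z, Sparse s z → G z = 0 := by
      intro z hz
      obtain ⟨i, hi⟩ := hGV z hz
      have h0 : V i = ⊥ := Submodule.finrank_eq_zero.1 (by have := hV i; omega)
      simpa [h0] using hi
    have huniv : ∀ S : Set (Fin m → Fin n → ℝ), (∀ A, A ∈ S) →
        ENNReal.ofReal (1 - Real.exp (-(1 / 4) * m)) ≤ gaussMatrix m n S := by
      intro S hS
      rw [Set.eq_univ_of_forall hS, measure_univ]
      exact ENNReal.ofReal_le_one.2 (by have := Real.exp_pos (-(1 / 4) * (m : ℝ)); linarith)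
    apply huniv
    intro A ε hε zhat hzhat _ zstar hzstar
    rw [hz _ hzhat, hz _ hzstar]
    have := norm_nonneg (0 - x)
    linarith
  · have hm0 : m ≠ 0 := by
      rintro rfl
      have h1 : (1 : ℝ) ≤ s := by exact_mod_cast hs
      have hl : 0 ≤ Real.log N := Real.log_nonneg (by exact_mod_cast hN)
      simp at hm
      linarith
    let B : Set (Fin m → Fin n → ℝ) := ⋃ i : Fin N, {A | ¬ ∀ u ∈ V i ⊔ Submodule.span ℝ {x},
      ‖Matrix.toEuclideanLin (Matrix.of A) u‖ ≤ 4 * ‖u‖ ∧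
      ‖u‖ ≤ 8 * ‖Matrix.toEuclideanLin (Matrix.of A) u‖}
    have hB : gaussMatrix m n B ≤ ENNReal.ofReal (Real.exp (-(1 / 4) * m)) := by
      refine (measure_iUnion_fintype_le _ _).trans ?_
      refine (Finset.sum_le_sum fun i _ => subspace_bad m n (s + 1) hm0 _ ?_).trans ?_
      · refine (Submodule.finrank_add_le_finrank_add_finrank _ _).trans ?_
        exact add_le_add (hV i) ((finrank_span_le_card _).trans (by simp))
      · rw [Finset.sum_const, ← ENNReal.ofReal_nsmul, nsmul_eq_mul]
        apply ENNReal.ofReal_le_ofReal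
        simpa using final_num s N m hs hN hm
    have hcompl : ENNReal.ofReal (1 - Real.exp (-(1 / 4) * m)) ≤ gaussMatrix m n Bᶜ := by
      rw [ENNReal.ofReal_sub _ (Real.exp_pos _).le, ENNReal.ofReal_one]
      refine tsub_le_iff_right.2 ?_
      calc (1 : ENNReal) = gaussMatrix m n (Bᶜ ∪ B) := by simp
        _ ≤ _ := (measure_union_le _ _).trans (by gcongr)
    refine hcompl.trans (measure_mono ?_)
    intro A hA
    simp only [B, Set.mem_compl_iff, Set.mem_iUnion, not_exists, Set.mem_ofPred_eq, not_not] at hA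
    have key : ∀ z, Sparse s z →
        ‖Matrix.toEuclideanLin (Matrix.of A) x - Matrix.toEuclideanLin (Matrix.of A) (G z)‖
          ≤ 4 * ‖G z - x‖ ∧ ‖G z - x‖ ≤
        8 * ‖Matrix.toEuclideanLin (Matrix.of A) x - Matrix.toEuclideanLin (Matrix.of A) (G z)‖ := by
      intro z hz
      obtain ⟨i, hi⟩ := hGV z hz
      have := hA i (G z - x) (Submodule.sub_mem _ (Submodule.mem_sup_left hi)
        (Submodule.mem_sup_right (Submodule.mem_span_singleton_self x)))
      rwa [map_sub, norm_sub_rev (Matrix.toEuclideanLin (Matrix.of A) (G z))] at this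
    intro ε hε zhat hzhat hmin zstar hzstar
    have h1 := (key zhat hzhat).2
    have h2 := hmin zstar hzstar
    have h3 := (key zstar hzstar).1
    linarith
end

section
/- Let H be a finite set of h affine hyperplanes in ℝ^k. Then the complement ℝ^k \ ⋃H has at most ∑_{i=0}^{k} C(h, i) connected components, where C(h,i) denotes the binomial coefficient; in particular the number of connected components is at most (h+1)^k. -/
open scoped RealInnerProductSpace

/-- An affine hyperplane in `ℝ^k`: a set `{x | ⟪a, x⟫ = b}` with `a ≠ 0`. -/
def IsAffineHyperplane {k : ℕ} (H : Set (EuclideanSpace ℝ (Fin k))) : Prop :=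
  ∃ (a : EuclideanSpace ℝ (Fin k)) (b : ℝ), a ≠ 0 ∧ H = {x | ⟪a, x⟫ = b}

theorem hac_aux_sum (h k : ℕ) : ∑ i ∈ Finset.range (k + 1), h.choose i ≤ (h + 1) ^ k := by
  rw [add_pow]
  refine Finset.sum_le_sum fun i hi => ?_
  have h1 : h.choose i ≤ h ^ i := Nat.choose_le_pow h i
  have h2 : 0 < k.choose i := Nat.choose_pos (by simp at hi; omega)
  simp only [one_pow, mul_one, Nat.cast_id]
  nlinarith [Nat.zero_le (h ^ i)]

theorem hac_aux_family {k : ℕ} {ι : Type} [Fintype ι] [DecidableEq ι]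
    (a : ι → EuclideanSpace ℝ (Fin k)) (b : ι → ℝ) (F : Finset (Finset ι))
    (hF : ∀ s ∈ F, ∃ x, (∀ i, ⟪a i, x⟫ ≠ b i) ∧ ∀ i, i ∈ s ↔ b i < ⟪a i, x⟫) :
    F.card ≤ ∑ i ∈ Finset.range (k + 1), (Fintype.card ι).choose i := by
  have hvc : F.vcDim ≤ k := by
    refine Finset.sup_le fun s hs => ?_
    rw [Finset.mem_shatterer] at hs
    by_contra hlt
    push Not at hlt
    have hdep : ¬ LinearIndependent ℝ (fun i : s => a i) := by
      intro hli
      have := hli.fintype_card_le_finrank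
      simp at this
      omega
    obtain ⟨c, hc, j, hj⟩ := Fintype.not_linearIndependent_iff.1 hdep
    have key : ∀ x : EuclideanSpace ℝ (Fin k),
        ∑ i : s, c i * (⟪a i, x⟫ - b i) = - ∑ i : s, c i * b i := by
      intro x
      have : ∑ i : s, c i * ⟪a i, x⟫ = 0 := by
        have h0 : ⟪∑ i : s, c i • a i, x⟫ = 0 := by rw [hc]; simp
        rw [sum_inner] at h0
        simpa [real_inner_smul_left] using h0
      simp only [mul_sub, Finset.sum_sub_distrib, this, zero_sub]
    have sh : ∀ P : s → Prop, ∃ x : EuclideanSpace ℝ (Fin k), ∀ i : s,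
        (P i → 0 < ⟪a i, x⟫ - b i) ∧ (¬ P i → ⟪a i, x⟫ - b i < 0) := by
      intro P
      classical
      obtain ⟨u, hu, hsu⟩ := hs (t := (Finset.univ.filter P).map (Function.Embedding.subtype _))
        (by intro i hi; simp at hi; exact hi.1)
      obtain ⟨x, hx, hxu⟩ := hF u hu
      refine ⟨x, fun i => ?_⟩
      have hiu : (i : ι) ∈ u ↔ P i := by
        have := congrArg (fun t => (i : ι) ∈ t) hsu
        simpa using this
      constructor
      · intro hp
        have := (hxu i).1 (hiu.2 hp)
        linarith
      · intro hp
        have h1 : ¬ b i < ⟪a i, x⟫ := fun h => hp (hiu.1 ((hxu i).2 h))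
        have := lt_of_le_of_ne (not_lt.1 h1) (hx i)
        linarith
    obtain ⟨x, hx⟩ := sh (fun i => 0 < c i)
    obtain ⟨y, hy⟩ := sh (fun i => c i < 0)
    have px : 0 < ∑ i : s, c i * (⟪a i, x⟫ - b i) := by
      refine Finset.sum_pos' (fun i _ => ?_) ⟨j, Finset.mem_univ _, ?_⟩
      · by_cases h : 0 < c i
        · exact (mul_pos h ((hx i).1 h)).le
        · exact mul_nonneg_of_nonpos_of_nonpos (not_lt.1 h) ((hx i).2 h).le
      · by_cases h : 0 < c j
        · exact (mul_pos h ((hx j).1 h))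
        · exact mul_pos_of_neg_of_neg (lt_of_le_of_ne (not_lt.1 h) hj) ((hx j).2 h)
    have py : ∑ i : s, c i * (⟪a i, y⟫ - b i) ≤ 0 := by
      refine Finset.sum_nonpos (fun i _ => ?_)
      by_cases h : c i < 0
      · exact (mul_neg_of_neg_of_pos h ((hy i).1 h)).le
      · exact mul_nonpos_of_nonneg_of_nonpos (not_lt.1 h) ((hy i).2 h).le
    rw [key] at px py
    linarith
  calc F.card ≤ F.shatterer.card := Finset.card_le_card_shatterer F
    _ ≤ ∑ i ∈ Finset.Iic F.vcDim, (Fintype.card ι).choose i := Finset.card_shatterer_le_sum_vcDim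
    _ ≤ _ := Finset.sum_le_sum_of_subset (by intro i hi; simp at hi ⊢; omega)

theorem hac_aux_comp {k : ℕ} {ι : Type} [Fintype ι] [DecidableEq ι]
    (a : ι → EuclideanSpace ℝ (Fin k)) (b : ι → ℝ) (S : Set (EuclideanSpace ℝ (Fin k)))
    (hS : ∀ x, x ∈ S ↔ ∀ i, ⟪a i, x⟫ ≠ b i) :
    Cardinal.mk (ConnectedComponents S) ≤
      ((∑ i ∈ Finset.range (k + 1), (Fintype.card ι).choose i : ℕ) : Cardinal) := by
  classical
  let f : S → Finset ι := fun x => Finset.univ.filter fun i => b i < ⟪a i, (x : EuclideanSpace ℝ (Fin k))⟫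
  have hf : ∀ x y : S, f x = f y → (x : ConnectedComponents S) = y := by
    intro x y hxy
    have hi : ∀ i, b i < ⟪a i, (x : EuclideanSpace ℝ (Fin k))⟫ ↔
        b i < ⟪a i, (y : EuclideanSpace ℝ (Fin k))⟫ := by
      intro i
      have := congrArg (fun t => i ∈ t) hxy
      simpa [f] using this
    have hseg : segment ℝ (x : EuclideanSpace ℝ (Fin k)) y ⊆ S := by
      rintro z ⟨p, q, hp, hq, hpq, rfl⟩
      rw [hS]
      intro i
      have hx := (hS x).1 x.2 i
      have hy := (hS y).1 y.2 i
      rw [inner_add_right, real_inner_smul_right, real_inner_smul_right]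
      obtain rfl : q = 1 - p := by linarith
      rcases lt_or_gt_of_ne hx with h | h
      · have h' : ⟪a i, (y : EuclideanSpace ℝ (Fin k))⟫ < b i :=
          lt_of_le_of_ne (not_lt.1 fun h2 => absurd ((hi i).2 h2) (not_lt.2 h.le)) hy
        apply ne_of_lt
        rcases hp.eq_or_lt with rfl | hp
        · linarith
        · nlinarith
      · have h' := (hi i).1 h
        apply ne_of_gt
        rcases hp.eq_or_lt with rfl | hp
        · linarith
        · nlinarith
    have hpc : IsPreconnected ((↑) ⁻¹' segment ℝ (x : EuclideanSpace ℝ (Fin k)) y : Set S) := by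
      rw [← Topology.IsInducing.subtypeVal.isPreconnected_image, Subtype.image_preimage_coe,
        Set.inter_eq_right.2 hseg]
      exact (convex_segment _ _).isPreconnected
    rw [ConnectedComponents.coe_eq_coe']
    exact hpc.subset_connectedComponent (right_mem_segment ℝ _ _) (left_mem_segment ℝ _ _)
  let F : Finset (Finset ι) := Finset.univ.filter fun s => ∃ x, f x = s
  have hFc := hac_aux_family a b F (by
    intro s hs
    obtain ⟨x, rfl⟩ := (Finset.mem_filter.1 hs).2
    exact ⟨x, (hS x).1 x.2, by simp [f]⟩)
  let g : ConnectedComponents S → F := fun c => ⟨f (Quot.out c), Finset.mem_filter.2 ⟨Finset.mem_univ _, _, rfl⟩⟩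
  have hg : Function.Injective g := by
    intro c d hcd
    have h1 := hf _ _ (Subtype.ext_iff.1 hcd)
    have e : ∀ c : ConnectedComponents S, ((Quot.out c : S) : ConnectedComponents S) = c :=
      fun c => Quot.out_eq c
    rwa [e, e] at h1
  calc Cardinal.mk (ConnectedComponents S) ≤ Cardinal.mk F := Cardinal.mk_le_of_injective hg
    _ = (F.card : Cardinal) := by simp
    _ ≤ _ := by exact_mod_cast hFc

/-- Lemma 1: the complement of `h` affine hyperplanes in `ℝ^k` has at most
`∑_{i=0}^{k} C(h,i)` connected components; in particular at most `(h+1)^k`. -/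
theorem hyperplane_arrangement_components {k h : ℕ}
    (H : Finset (Set (EuclideanSpace ℝ (Fin k)))) (hcard : H.card = h)
    (hH : ∀ Hp ∈ H, IsAffineHyperplane Hp) :
    Cardinal.mk (ConnectedComponents ↥((⋃₀ (H : Set (Set (EuclideanSpace ℝ (Fin k)))))ᶜ)) ≤
        ((∑ i ∈ Finset.range (k + 1), h.choose i : ℕ) : Cardinal) ∧
    Cardinal.mk (ConnectedComponents ↥((⋃₀ (H : Set (Set (EuclideanSpace ℝ (Fin k)))))ᶜ)) ≤
        (((h + 1) ^ k : ℕ) : Cardinal) := by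
  classical
  choose a b _ hab using fun p : H => hH p p.2
  have main := hac_aux_comp a b ((⋃₀ (H : Set (Set (EuclideanSpace ℝ (Fin k)))))ᶜ) (by
    intro x
    simp only [Set.mem_compl_iff, Set.mem_sUnion, not_exists, not_and, Finset.mem_coe]
    constructor
    · intro hx i hi
      apply hx i i.2
      rw [hab i]
      exact hi
    · intro hx p hp hxp
      apply hx ⟨p, hp⟩
      have := hab ⟨p, hp⟩
      simp only at this
      rw [this] at hxp
      exact hxp)
  rw [Fintype.card_coe, hcard] at main
  exact ⟨main, main.trans (by exact_mod_cast hac_aux_sum h k)⟩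
end

section
/- Let V ⊆ ℝ^k be a linear subspace with dim V = s, and let H be a finite set of h affine hyperplanes in ℝ^k. Then the set V \ ⋃H has at most ∑_{i=0}^{s} C(h, i) connected components, where C(h,i) denotes the binomial coefficient. -/
open scoped RealInnerProductSpace

theorem aux_vc {k s : ℕ} {ι : Type} [Fintype ι] [DecidableEq ι]
    (V : Submodule ℝ (EuclideanSpace ℝ (Fin k))) (hV : Module.finrank ℝ V = s)
    (a : ι → EuclideanSpace ℝ (Fin k)) (b : ι → ℝ) (A : Finset (Finset ι))
    (hA : ∀ S ∈ A, ∃ x ∈ V, (∀ i, ⟪a i, x⟫ ≠ b i) ∧ ∀ i, i ∈ S ↔ b i < ⟪a i, x⟫) :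
    A.vcDim ≤ s := by
  unfold Finset.vcDim
  refine Finset.sup_le fun T hT => ?_
  rw [Finset.mem_shatterer] at hT
  by_contra! hlt
  let φ : T → Module.Dual ℝ V := fun i => (innerₛₗ ℝ (a i)).comp V.subtype
  have hnl : ¬ LinearIndependent ℝ φ := by
    intro hl
    have := hl.fintype_card_le_finrank
    rw [Subspace.dual_finrank_eq, hV, Fintype.card_coe] at this
    omega
  rw [Fintype.not_linearIndependent_iff] at hnl
  obtain ⟨c, hc, i₀, hi₀⟩ := hnl
  have hc' : ∀ x ∈ V, ∑ i, c i * ⟪a i, x⟫ = 0 := by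
    intro x hx
    have := congrArg (fun f => f ⟨x, hx⟩) hc
    simpa [φ] using this
  -- any sign choice gives a definite sign
  have key : ∀ d : T → ℝ, d i₀ ≠ 0 →
      (∀ x ∈ V, ∑ i, d i * ⟪a i, x⟫ = 0) → ∑ i, d i * b i < 0 := by
    intro d hd hd'
    classical
    obtain ⟨S, hS, hTS⟩ := hT (t := (Finset.univ.filter fun i : T => 0 < d i).map
      (Function.Embedding.subtype _)) (by
        intro j hj
        simp at hj
        exact hj.1)
    obtain ⟨x, hxV, hne, hx⟩ := hA S hS
    have hiff : ∀ i : T, b i < ⟪a i, x⟫ ↔ 0 < d i := by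
      intro i
      rw [← hx]
      have := congrArg (fun U => (i : ι) ∈ U) hTS
      simpa using this
    have hpos : 0 < ∑ i, d i * (⟪a i, x⟫ - b i) := by
      have hterm : ∀ i : T, d i ≠ 0 → 0 < d i * (⟪a i, x⟫ - b i) := by
        intro i hi
        rcases lt_or_gt_of_ne hi with h | h
        · have h1 : ¬ b i < ⟪a i, x⟫ := fun h' => absurd ((hiff i).1 h') (by linarith)
          have h2 : ⟪a i, x⟫ < b i := lt_of_le_of_ne (not_lt.1 h1) (hne i)
          exact mul_pos_of_neg_of_neg h (by linarith)
        · exact mul_pos h (by linarith [(hiff i).2 h])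
      refine Finset.sum_pos' (fun i _ => ?_) ⟨i₀, Finset.mem_univ _, hterm i₀ hd⟩
      by_cases hi : d i = 0
      · simp [hi]
      · exact (hterm i hi).le
    simp only [mul_sub, Finset.sum_sub_distrib] at hpos
    rw [hd' x hxV] at hpos
    linarith
  have h1 := key c hi₀ hc'
  have h2 := key (fun i => - c i) (by simpa using hi₀) (by
    intro x hx
    simp only [neg_mul, Finset.sum_neg_distrib, hc' x hx, neg_zero])
  simp only [neg_mul, Finset.sum_neg_distrib] at h2
  linarith

/-- Within an `s`-dimensional subspace `V ⊆ ℝ^k`, removing `h` affine hyperplanes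
leaves at most `∑_{i=0}^{s} C(h,i)` connected components. -/
theorem hyperplane_arrangement_components_in_subspace {k h s : ℕ}
    (V : Submodule ℝ (EuclideanSpace ℝ (Fin k))) (hV : Module.finrank ℝ V = s)
    (H : Finset (Set (EuclideanSpace ℝ (Fin k)))) (hcard : H.card = h)
    (hH : ∀ Hp ∈ H, IsAffineHyperplane Hp) :
    Cardinal.mk (ConnectedComponents
        ↥((V : Set (EuclideanSpace ℝ (Fin k))) \ ⋃₀ (H : Set (Set (EuclideanSpace ℝ (Fin k)))))) ≤
      ((∑ i ∈ Finset.range (s + 1), h.choose i : ℕ) : Cardinal) := by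
  classical
  choose a b ha hab using fun i : H => hH i.1 i.2
  set X := ((V : Set (EuclideanSpace ℝ (Fin k))) \ ⋃₀ (H : Set (Set (EuclideanSpace ℝ (Fin k))))) with hX
  have hXne : ∀ x ∈ X, ∀ i : H, ⟪a i, x⟫ ≠ b i := by
    intro x hx i h
    refine hx.2 ⟨i.1, i.2, ?_⟩
    rw [hab i]
    exact h
  have hXof : ∀ x ∈ V, (∀ i : H, ⟪a i, x⟫ ≠ b i) → x ∈ X := by
    rintro x hx h
    refine ⟨hx, ?_⟩
    rintro ⟨P, hP, hxP⟩
    have hP' : P ∈ H := hP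
    have := hab ⟨P, hP'⟩
    simp only at this
    rw [this] at hxP
    exact h ⟨P, hP'⟩ hxP
  let sig : X → Finset H := fun x => Finset.univ.filter fun i => b i < ⟪a i, x.1⟫
  let A : Finset (Finset H) := Finset.univ.filter fun S => ∃ x, sig x = S
  have hvc : A.vcDim ≤ s := by
    refine aux_vc V hV a b A ?_
    intro S hS
    obtain ⟨x, rfl⟩ := (Finset.mem_filter.1 hS).2
    exact ⟨x.1, x.2.1, hXne x.1 x.2, fun i => by simp [sig]⟩
  have hAcard : A.card ≤ ∑ i ∈ Finset.range (s + 1), h.choose i := by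
    refine A.card_le_card_shatterer.trans (Finset.card_shatterer_le_sum_vcDim.trans ?_)
    rw [Fintype.card_coe, hcard]
    refine Finset.sum_le_sum_of_subset ?_
    intro i hi
    simp at hi ⊢
    omega
  have hconn : ∀ x y : X, sig x = sig y → (x : ConnectedComponents X) = y := by
    intro x y hxy
    have hiff : ∀ i : H, b i < ⟪a i, x.1⟫ ↔ b i < ⟪a i, y.1⟫ := by
      intro i
      have := congrArg (fun U => i ∈ U) hxy
      simpa [sig] using this
    have hseg : segment ℝ x.1 y.1 ⊆ X := by
      rintro z ⟨p, q, hp, hq, hpq, rfl⟩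
      refine hXof _ (V.add_mem (V.smul_mem _ x.2.1) (V.smul_mem _ y.2.1)) ?_
      intro i
      rw [inner_add_right, inner_smul_right, inner_smul_right]
      rcases lt_or_gt_of_ne (hXne x.1 x.2 i) with h1 | h1
      · have h2 : ⟪a i, y.1⟫ < b i :=
          lt_of_le_of_ne (not_lt.1 fun h' => absurd ((hiff i).2 h') h1.not_gt) (hXne y.1 y.2 i)
        exact ((convex_Iio (𝕜 := ℝ) (b i)) h1 h2 hp hq hpq).ne
      · exact ((convex_Ioi (𝕜 := ℝ) (b i)) h1 ((hiff i).1 h1) hp hq hpq).ne'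
    have hpre : IsPreconnected (Subtype.val ⁻¹' segment ℝ x.1 y.1 : Set X) := by
      rw [← Topology.IsInducing.subtypeVal.isPreconnected_image,
        Subtype.image_preimage_coe, Set.inter_eq_self_of_subset_right hseg]
      exact (convex_segment _ _).isPreconnected
    rw [ConnectedComponents.coe_eq_coe']
    exact hpre.subset_connectedComponent (right_mem_segment ℝ x.1 y.1) (left_mem_segment ℝ x.1 y.1)
  let F : ConnectedComponents X → A := fun c =>
    ⟨sig (Quotient.out c), Finset.mem_filter.2 ⟨Finset.mem_univ _, _, rfl⟩⟩
  have hF : Function.Injective F := by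
    intro c d hcd
    have := hconn _ _ (congrArg Subtype.val hcd)
    have e1 : ((Quotient.out c : X) : ConnectedComponents X) = c := Quotient.out_eq c
    have e2 : ((Quotient.out d : X) : ConnectedComponents X) = d := Quotient.out_eq d
    rw [← e1, ← e2, this]
  calc Cardinal.mk (ConnectedComponents X) ≤ Cardinal.mk A := Cardinal.mk_le_of_injective hF
    _ = (A.card : Cardinal) := by simp
    _ ≤ _ := by exact_mod_cast hAcard
end

section
/- There exist universal constants C, c > 0 such that the following holds. Let V₁, …, V_N be linear subspaces of ℝ^n, each of dimension at most s, let α ∈ (0,1), and let A ∈ ℝ^{m×n} be a random matrix with i.i.d. N(0, 1/m) entries. If m ≥ C·(log N + s)/α², then with probability at least 1 − exp(−c·α²·m), for all x₁, x₂ ∈ ⋃_{i=1}^N V_i one has ‖A(x₁ − x₂)‖₂ ≥ (1 − α)·‖x₁ − x₂‖₂; that is, A satisfies S-REC(⋃_i V_i, 1 − α, 0). -/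
open MeasureTheory ProbabilityTheory

lemma sr_exp_ineq {u : ℝ} (hu : |u| ≤ 1/2) : Real.exp (-(u + u^2)) ≤ 1 - u := by
  rw [abs_le] at hu
  obtain ⟨h1, h2⟩ := hu
  rw [Real.exp_neg]
  have hp : (0:ℝ) < 1 - u := by linarith
  rw [inv_le_comm₀ (Real.exp_pos _) hp, inv_le_iff_one_le_mul₀ hp]
  rcases le_or_gt 0 u with h | h
  · have := Real.quadratic_le_exp_of_nonneg (x := u + u^2) (by positivity)
    have h3 : 1 ≤ (1 + (u + u^2) + (u+u^2)^2/2) * (1 - u) := by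
      have : 0 ≤ u^2 * ((1+u)^2*(1-u) - 2 * u) := by
        apply mul_nonneg (sq_nonneg _)
        nlinarith [mul_nonneg h (sub_nonneg.2 h2), mul_nonneg h (mul_nonneg h (sub_nonneg.2 h2))]
      nlinarith
    nlinarith
  · have := Real.add_one_le_exp (u + u^2)
    have h3 : 0 ≤ -u * u^2 := mul_nonneg (by linarith) (sq_nonneg u)
    nlinarith

lemma sr_mgf_sq (v : NNReal) (hv : v ≠ 0) (t : ℝ) (ht : |2 * t * v| ≤ 1/2) :
    Integrable (fun x : ℝ => Real.exp (t * x^2)) (gaussianReal 0 v) ∧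
    mgf (fun x : ℝ => x^2) (gaussianReal 0 v) t ≤ Real.exp (t * v + 2 * t^2 * v^2) := by
  have hv0 : (0:ℝ) < v := by positivity
  have ht' := abs_le.1 ht
  set b : ℝ := 1 / (2 * v) - t with hb
  have hb0 : 0 < b := by
    rw [hb, sub_pos, lt_div_iff₀ (by positivity)]; linarith
  have key : ∀ x : ℝ, gaussianPDFReal 0 v x * Real.exp (t * x^2)
      = (Real.sqrt (2 * Real.pi * v))⁻¹ * Real.exp (-b * x^2) := by
    intro x
    rw [gaussianPDFReal, mul_assoc, ← Real.exp_add]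
    congr 2
    rw [hb]; field_simp; ring
  constructor
  · rw [gaussianReal_of_var_ne_zero _ hv]
    rw [integrable_withDensity_iff_integrable_smul' (measurable_gaussianPDF _ _)
      (Filter.Eventually.of_forall fun x => gaussianPDF_lt_top)]
    simp only [toReal_gaussianPDF, smul_eq_mul, key]
    exact (integrable_exp_neg_mul_sq hb0).const_mul _
  · rw [mgf, integral_gaussianReal_eq_integral_smul hv]
    simp only [smul_eq_mul, key]
    rw [integral_const_mul, integral_gaussian, ← Real.sqrt_inv, ← Real.sqrt_mul (by positivity)]
    have hp : (0:ℝ) < 1 - 2 * t * v := by linarith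
    have e1 : (2 * Real.pi * v)⁻¹ * (Real.pi / b) = (1 - 2 * t * v)⁻¹ := by
      have : b = (1 - 2 * t * v) / (2 * v) := by rw [hb]; field_simp
      rw [this]
      have := Real.pi_pos
      field_simp
    rw [e1]
    have := sr_exp_ineq ht
    apply Real.sqrt_le_iff.2 ⟨(Real.exp_pos _).le, ?_⟩
    rw [← Real.exp_nat_mul]
    rw [inv_le_comm₀ hp (Real.exp_pos _), ← Real.exp_neg]
    refine le_trans (le_of_eq ?_) this
    congr 1; push_cast; ring

lemma sr_row_law (n : ℕ) (v : NNReal) (z : Fin n → ℝ) (w : NNReal) (hw : (w:ℝ) = v * ∑ j, z j ^2) :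
    (Measure.pi fun _ : Fin n => gaussianReal 0 v).map (fun a => ∑ j, a j * z j)
      = gaussianReal 0 w := by
  have hm : Measurable (fun a : Fin n → ℝ => ∑ j, a j * z j) := by fun_prop
  have : IsProbabilityMeasure ((Measure.pi fun _ : Fin n => gaussianReal 0 v).map (fun a => ∑ j, a j * z j)) :=
    Measure.isProbabilityMeasure_map hm.aemeasurable
  apply Measure.ext_of_charFun
  ext t
  rw [charFun_gaussianReal, charFun_apply_real, integral_map hm.aemeasurable (by fun_prop)]
  have : ∀ a : Fin n → ℝ, Complex.exp (t * ((∑ j, a j * z j : ℝ) : ℂ) * Complex.I)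
      = ∏ j, Complex.exp (((t * z j : ℝ) : ℂ) * (a j : ℂ) * Complex.I) := by
    intro a
    rw [← Complex.exp_sum]
    congr 1
    push_cast
    rw [Finset.mul_sum, Finset.sum_mul]
    refine Finset.sum_congr rfl fun j _ => by ring
  simp_rw [this]
  rw [integral_fintype_prod_eq_prod (𝕜 := ℂ) (fun j (x:ℝ) => Complex.exp (((t * z j : ℝ) : ℂ) * (x : ℂ) * Complex.I))]
  simp_rw [← charFun_apply_real, charFun_gaussianReal]
  rw [← Complex.exp_sum]
  congr 1
  have : (w:ℂ) = v * ∑ j, (z j : ℂ)^2 := by exact_mod_cast congrArg (fun x : ℝ => (x:ℂ)) hw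
  rw [this]
  simp only [Complex.ofReal_zero, mul_zero, zero_mul, zero_sub, Finset.mul_sum, Finset.sum_mul, Finset.sum_div, Finset.sum_neg_distrib]
  congr 1
  refine Finset.sum_congr rfl fun j _ => by push_cast; ring

lemma sr_net (E : Type*) [NormedAddCommGroup E] [InnerProductSpace ℝ E] [FiniteDimensional ℝ E] :
    ∃ T : Finset E, T.card ≤ 5 ^ Module.finrank ℝ E ∧ (∀ x ∈ T, ‖x‖ ≤ 1) ∧
      ∀ x : E, ‖x‖ ≤ 1 → ∃ y ∈ T, ‖x - y‖ ≤ 1/2 := by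
  classical
  let P : ℕ → Prop := fun k => ∃ T : Finset E, T.card = k ∧ (∀ x ∈ T, ‖x‖ ≤ 1) ∧
    ∀ x ∈ T, ∀ y ∈ T, x ≠ y → 1/2 ≤ ‖x - y‖
  have hbd : ∀ k, P k → k ≤ 5 ^ Module.finrank ℝ E := by
    rintro k ⟨T, rfl, h1, h2⟩
    have hinj : Function.Injective (fun x : E => (2:ℝ) • x) := smul_right_injective E two_ne_zero
    rw [← Finset.card_image_of_injective T hinj]
    apply Besicovitch.card_le_of_separated
    · intro c hc
      obtain ⟨x, hx, rfl⟩ := Finset.mem_image.1 hc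
      have := h1 x hx
      simp only [norm_smul, Real.norm_ofNat]; linarith
    · intro c hc d hd hcd
      obtain ⟨x, hx, rfl⟩ := Finset.mem_image.1 hc
      obtain ⟨y, hy, rfl⟩ := Finset.mem_image.1 hd
      have := h2 x hx y hy (fun h => hcd (by rw [h]))
      simp only [← smul_sub, norm_smul, Real.norm_ofNat]; linarith
  have h0 : P 0 := ⟨∅, by simp⟩
  have hg := Nat.findGreatest_spec (P := P) (Nat.zero_le (5 ^ Module.finrank ℝ E)) h0
  obtain ⟨T, hT, h1, h2⟩ := hg
  refine ⟨T, hbd _ ⟨T, rfl, h1, h2⟩, h1, ?_⟩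
  intro x hx
  by_contra! hcon
  have hxT : x ∉ T := fun h => by have := hcon x h; norm_num at this
  have hP : P (T.card + 1) := by
    refine ⟨insert x T, Finset.card_insert_of_notMem hxT, ?_, ?_⟩
    · intro y hy
      rcases Finset.mem_insert.1 hy with rfl | hy
      · exact hx
      · exact h1 y hy
    · intro y hy z hz hyz
      rcases Finset.mem_insert.1 hy with rfl | hy1 <;> rcases Finset.mem_insert.1 hz with rfl | hz1
      · exact absurd rfl hyz
      · exact (hcon z hz1).le
      · rw [norm_sub_rev]; exact (hcon y hy1).le
      · exact h2 y hy1 z hz1 hyz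
  have := Nat.le_findGreatest (hbd _ hP) hP
  omega

lemma sr_det {E F : Type*} [NormedAddCommGroup E] [InnerProductSpace ℝ E] [FiniteDimensional ℝ E]
    [NormedAddCommGroup F] [InnerProductSpace ℝ F] [FiniteDimensional ℝ F]
    (T : Finset E) (hT1 : ∀ x ∈ T, ‖x‖ ≤ 1) (hT : ∀ x : E, ‖x‖ ≤ 1 → ∃ y ∈ T, ‖x - y‖ ≤ 1/2)
    (L : E →L[ℝ] F) (τ : ℝ) (hτ : 0 ≤ τ)
    (hp : ∀ x ∈ T, ∀ y ∈ T, |‖L (x + y)‖^2 - ‖x + y‖^2| ≤ τ * ‖x + y‖^2)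
    (hm : ∀ x ∈ T, ∀ y ∈ T, |‖L (x - y)‖^2 - ‖x - y‖^2| ≤ τ * ‖x - y‖^2) (x : E) :
    (1 - 4 * τ) * ‖x‖^2 ≤ ‖L x‖^2 := by
  let B : E →L[ℝ] E := (ContinuousLinearMap.adjoint L).comp L - ContinuousLinearMap.id ℝ E
  have hB : ∀ x y, inner ℝ (B x) y = inner ℝ (L x) (L y) - inner ℝ x y := by
    intro x y
    simp [B, inner_sub_left, ContinuousLinearMap.adjoint_inner_left]
  have hpt : ∀ x ∈ T, ∀ y ∈ T, inner ℝ (B x) y ≤ τ := by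
    intro x hx y hy
    rw [hB]
    have h1 := (abs_le.1 (hp x hx y hy)).2
    have h2 := (abs_le.1 (hm x hx y hy)).1
    rw [map_add] at h1
    rw [map_sub] at h2
    rw [norm_add_sq_real, norm_add_sq_real] at h1
    rw [norm_sub_sq_real, norm_sub_sq_real] at h2
    have h3 : ‖x‖^2 ≤ 1 := by have := hT1 x hx; have := norm_nonneg x; nlinarith
    have h4 : ‖y‖^2 ≤ 1 := by have := hT1 y hy; have := norm_nonneg y; nlinarith
    nlinarith
  have hy : ∀ y ∈ T, ‖B y‖ ≤ 2 * τ := by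
    intro y hyT
    by_cases h0 : B y = 0
    · rw [h0, norm_zero]; positivity
    have hn : 0 < ‖B y‖ := norm_pos_iff.2 h0
    obtain ⟨z, hz, hz'⟩ := hT ((‖B y‖)⁻¹ • B y) (by rw [norm_smul, norm_inv, norm_norm, inv_mul_cancel₀ hn.ne'])
    have e1 : inner ℝ (B y) ((‖B y‖)⁻¹ • B y) = ‖B y‖ := by
      rw [inner_smul_right, real_inner_self_eq_norm_sq]; field_simp
    have e2 : inner ℝ (B y) ((‖B y‖)⁻¹ • B y) = inner ℝ (B y) z + inner ℝ (B y) ((‖B y‖)⁻¹ • B y - z) := by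
      rw [← inner_add_right]; congr 1; abel
    have e3 := real_inner_le_norm (B y) ((‖B y‖)⁻¹ • B y - z)
    have e4 := hpt y hyT z hz
    nlinarith
  have hop : ‖B‖ ≤ 2 * τ + ‖B‖/2 := by
    refine ContinuousLinearMap.opNorm_le_of_unit_norm (by positivity) ?_
    intro x hx
    obtain ⟨y, hyT, hy'⟩ := hT x hx.le
    have e1 : B x = B y + B (x - y) := by rw [← map_add]; congr 1; abel
    have e2 := B.le_opNorm (x - y)
    have e3 := norm_add_le (B y) (B (x-y))
    have e4 := hy y hyT
    have := norm_nonneg B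
    rw [e1]; nlinarith
  have h4 : ‖B‖ ≤ 4 * τ := by linarith
  have e1 := hB x x
  rw [real_inner_self_eq_norm_sq, real_inner_self_eq_norm_sq] at e1
  have e2 := abs_le.1 (abs_real_inner_le_norm (B x) x)
  have e3 := B.le_opNorm x
  have e5 : ‖B x‖ * ‖x‖ ≤ 4 * τ * ‖x‖ * ‖x‖ := by
    apply mul_le_mul_of_nonneg_right _ (norm_nonneg _)
    exact e3.trans (mul_le_mul_of_nonneg_right h4 (norm_nonneg _))
  nlinarith [e2.1]

instance sr_inst (m n : ℕ) : IsProbabilityMeasure (gaussMatrix m n) := by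
  unfold gaussMatrix; infer_instance

lemma sr_mgf_mat (m n : ℕ) (z : Fin n → ℝ) (w : NNReal) (hw0 : w ≠ 0)
    (hw : (w:ℝ) = ((m:NNReal)⁻¹ : NNReal) * ∑ j, z j ^2) (t : ℝ) (ht : |2 * t * w| ≤ 1/2) :
    Integrable (fun A : Fin m → Fin n → ℝ => Real.exp (t * ∑ k, (∑ j, A k j * z j)^2)) (gaussMatrix m n) ∧
    mgf (fun A : Fin m → Fin n → ℝ => ∑ k, (∑ j, A k j * z j)^2) (gaussMatrix m n) t ≤
      Real.exp (m * (t * w + 2 * t^2 * w^2)) := by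
  obtain ⟨hi, hb⟩ := sr_mgf_sq w hw0 t ht
  let ν : Measure (Fin n → ℝ) := Measure.pi fun _ => gaussianReal 0 ((m : NNReal))⁻¹
  have hν : ν.map (fun a => ∑ j, a j * z j) = gaussianReal 0 w := sr_row_law n _ z w hw
  let X : Fin m → (Fin m → Fin n → ℝ) → ℝ := fun k A => (∑ j, A k j * z j)^2
  have hXm : ∀ k, Measurable (X k) := by intro k; simp only [X]; fun_prop
  have hind : iIndepFun X (gaussMatrix m n) :=
    iIndepFun_pi (X := fun (_ : Fin m) (a : Fin n → ℝ) => (∑ j, a j * z j)^2)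
      (fun i => Measurable.aemeasurable (by fun_prop))
  have hg : Measurable (fun a : Fin n → ℝ => ∑ j, a j * z j) := by fun_prop
  have hlaw : ∀ k, (gaussMatrix m n).map (fun A => ∑ j, A k j * z j) = gaussianReal 0 w := by
    intro k
    rw [← hν, ← (measurePreserving_eval (fun _ : Fin m => ν) k).map_eq,
      Measure.map_map hg (measurable_pi_apply k)]
    rfl
  have hgk : ∀ k, Measurable (fun A : Fin m → Fin n → ℝ => ∑ j, A k j * z j) := by
    intro k; fun_prop
  have hint : ∀ k, Integrable (fun A => Real.exp (t * X k A)) (gaussMatrix m n) := by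
    intro k
    rw [← hlaw k] at hi
    exact hi.comp_measurable (hgk k)
  have hmgf : ∀ k, mgf (X k) (gaussMatrix m n) t ≤ Real.exp (t * w + 2 * t^2 * w^2) := by
    intro k
    refine le_trans (le_of_eq ?_) hb
    rw [← hlaw k, mgf_map (hgk k).aemeasurable (by fun_prop)]
    rfl
  have hs : (fun A : Fin m → Fin n → ℝ => ∑ k, (∑ j, A k j * z j)^2) = ∑ k, X k := by
    ext A; simp [X]
  constructor
  · have := hind.integrable_exp_mul_sum hXm (s := Finset.univ) (t := t) (fun k _ => hint k)
    rw [← hs] at this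
    exact this
  · rw [hs, hind.mgf_sum hXm]
    calc _ ≤ ∏ k : Fin m, Real.exp (t * w + 2 * t^2 * w^2) :=
          Finset.prod_le_prod (fun _ _ => mgf_nonneg) (fun k _ => hmgf k)
      _ = _ := by simp [← Real.exp_nat_mul]

lemma sr_conc (m n : ℕ) (hm : 0 < m) (z : EuclideanSpace ℝ (Fin n)) (τ : ℝ) (h0 : 0 < τ) (h1 : τ ≤ 1) :
    gaussMatrix m n {A | τ * ‖z‖^2 < |‖Matrix.toEuclideanLin (Matrix.of A) z‖^2 - ‖z‖^2|}
      ≤ ENNReal.ofReal (2 * Real.exp (-(τ^2 * m / 8))) := by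
  by_cases hz : z = 0
  · simp [hz]
  have hzp : 0 < ‖z‖^2 := by have := norm_pos_iff.2 hz; positivity
  have hmp : (0:ℝ) < m := by exact_mod_cast hm
  let w : NNReal := ⟨‖z‖^2 / m, by positivity⟩
  have hw : (w:ℝ) = ‖z‖^2 / m := rfl
  have hwp : (0:ℝ) < w := by rw [hw]; positivity
  have hw0 : w ≠ 0 := by intro h; rw [h] at hwp; simp at hwp
  have hw2 : (w:ℝ) = ((m:NNReal)⁻¹ : NNReal) * ∑ j, z j ^2 := by
    rw [hw, EuclideanSpace.real_norm_sq_eq]; push_cast; field_simp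
  have hzw : ‖z‖^2 = m * w := by rw [hw]; field_simp
  have hS : ∀ A : Fin m → Fin n → ℝ, ‖Matrix.toEuclideanLin (Matrix.of A) z‖^2 = ∑ k, (∑ j, A k j * z j)^2 := by
    intro A
    rw [EuclideanSpace.real_norm_sq_eq]
    simp [Matrix.toLpLin_apply, Matrix.mulVec, dotProduct]
  obtain ⟨i1, b1⟩ := sr_mgf_mat m n z w hw0 hw2 (τ / (4 * w)) (by
    have : 2 * (τ / (4 * w)) * w = τ / 2 := by field_simp; ring
    rw [this, abs_of_pos (by positivity)]; linarith)
  obtain ⟨i2, b2⟩ := sr_mgf_mat m n z w hw0 hw2 (-(τ / (4 * w))) (by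
    have : 2 * (-(τ / (4 * w))) * w = -(τ / 2) := by field_simp; ring
    rw [this, abs_neg, abs_of_pos (by positivity)]; linarith)
  have c1 := measure_ge_le_exp_mul_mgf ((1 + τ) * (m * w)) (by positivity) i1
  have c2 := measure_le_le_exp_mul_mgf ((1 - τ) * (m * w)) (by rw [neg_nonpos]; positivity) i2
  replace c1 := c1.trans (mul_le_mul_of_nonneg_left b1 (Real.exp_pos _).le)
  replace c2 := c2.trans (mul_le_mul_of_nonneg_left b2 (Real.exp_pos _).le)
  rw [← Real.exp_add] at c1 c2
  have e1 : -(τ / (4 * w)) * ((1 + τ) * (m * w)) + m * (τ / (4 * w) * w + 2 * (τ / (4 * w))^2 * w^2)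
      = -(τ^2 * m / 8) := by field_simp; ring
  have e2 : -(-(τ / (4 * w))) * ((1 - τ) * (m * w)) + m * (-(τ / (4 * w)) * w + 2 * (-(τ / (4 * w)))^2 * w^2)
      = -(τ^2 * m / 8) := by field_simp; ring
  rw [e1] at c1
  rw [e2] at c2
  rw [← ENNReal.ofReal_toReal (measure_ne_top (gaussMatrix m n) _)]
  apply ENNReal.ofReal_le_ofReal
  rw [two_mul]
  refine le_trans ?_ (add_le_add c1 c2)
  refine le_trans (measureReal_mono ?_ (measure_ne_top _ _)) (measureReal_union_le _ _)
  intro A hA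
  simp only [Set.mem_ofPred_eq, hS, hzw] at hA
  simp only [Set.mem_union, Set.mem_ofPred_eq]
  rcases lt_abs.1 hA with h | h
  · left; linarith
  · right; linarith

lemma sr_sub (m n d : ℕ) (hm : 0 < m) (W : Submodule ℝ (EuclideanSpace ℝ (Fin n)))
    (hW : Module.finrank ℝ W ≤ d) (α : ℝ) (h0 : 0 < α) (h1 : α < 1) :
    gaussMatrix m n {A | ∃ x ∈ W, ‖Matrix.toEuclideanLin (Matrix.of A) x‖^2 < (1 - α) * ‖x‖^2}
      ≤ ENNReal.ofReal (4 * 25 ^ d * Real.exp (-(α^2 * m / 128))) := by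
  classical
  obtain ⟨T, hc, hT1, hT⟩ := sr_net W
  let bad : EuclideanSpace ℝ (Fin n) → Set (Fin m → Fin n → ℝ) := fun z =>
    {A | α / 4 * ‖z‖^2 < |‖Matrix.toEuclideanLin (Matrix.of A) z‖^2 - ‖z‖^2|}
  have hbad : ∀ z, gaussMatrix m n (bad z) ≤ ENNReal.ofReal (2 * Real.exp (-(α^2 * m / 128))) := by
    intro z
    refine (sr_conc m n hm z (α/4) (by linarith) (by linarith)).trans (le_of_eq ?_)
    congr 4; ring
  have hsub : {A : Fin m → Fin n → ℝ | ∃ x ∈ W, ‖Matrix.toEuclideanLin (Matrix.of A) x‖^2 < (1 - α) * ‖x‖^2}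
      ⊆ ⋃ p ∈ T ×ˢ T, (bad ((p.1 : EuclideanSpace ℝ (Fin n)) + p.2) ∪ bad ((p.1 : EuclideanSpace ℝ (Fin n)) - p.2)) := by
    rintro A ⟨x, hx, hlt⟩
    by_contra hcon
    simp only [Set.mem_iUnion, not_exists, Set.mem_union, not_or, Finset.mem_product] at hcon
    let L : W →L[ℝ] EuclideanSpace ℝ (Fin m) :=
      (LinearMap.toContinuousLinearMap (Matrix.toEuclideanLin (Matrix.of A))).comp W.subtypeL
    have := sr_det T hT1 hT L (α/4) (by positivity)
      (fun x hx y hy => not_lt.1 (hcon (x, y) ⟨hx, hy⟩).1)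
      (fun x hx y hy => not_lt.1 (hcon (x, y) ⟨hx, hy⟩).2) ⟨x, hx⟩
    have e : (1 - 4 * (α/4)) * ‖x‖^2 ≤ ‖Matrix.toEuclideanLin (Matrix.of A) x‖^2 := this
    have : 1 - 4 * (α/4) = 1 - α := by ring
    rw [this] at e
    linarith
  refine (measure_mono hsub).trans ((measure_biUnion_finset_le _ _).trans ?_)
  calc _ ≤ ∑ p ∈ T ×ˢ T, (ENNReal.ofReal (2 * Real.exp (-(α^2 * m / 128))) + ENNReal.ofReal (2 * Real.exp (-(α^2 * m / 128)))) :=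
        Finset.sum_le_sum fun p _ => (measure_union_le _ _).trans (add_le_add (hbad _) (hbad _))
    _ = ENNReal.ofReal ((T.card * T.card : ℕ) * (4 * Real.exp (-(α^2 * m / 128)))) := by
        rw [Finset.sum_const, Finset.card_product, ← ENNReal.ofReal_add (by positivity) (by positivity),
          nsmul_eq_mul, ENNReal.ofReal_mul (by positivity), ENNReal.ofReal_natCast]
        congr 2; ring
    _ ≤ _ := by
        apply ENNReal.ofReal_le_ofReal
        have h5 : T.card ≤ 5 ^ d := hc.trans (Nat.pow_le_pow_right (by norm_num) hW)
        have h25 : T.card * T.card ≤ 25 ^ d := by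
          calc _ ≤ 5 ^ d * 5 ^ d := Nat.mul_le_mul h5 h5
            _ = 25 ^ d := by rw [← mul_pow]; norm_num
        have : ((T.card * T.card : ℕ) : ℝ) ≤ 25 ^ d := by exact_mod_cast h25
        have := mul_le_mul_of_nonneg_right this (by positivity : 0 ≤ 4 * Real.exp (-(α^2 * m / 128)))
        linarith

/-- Union-bound step of Lemma 4: a Gaussian matrix with `m ≳ (log N + s)/α²` rows
satisfies S-REC(⋃ᵢ Vᵢ, 1-α, 0) over a union of `N` subspaces of dimension at most `s`,
with probability at least `1 - exp(-c α² m)`. -/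
theorem gaussian_srec_on_union_of_subspaces :
    ∃ C c : ℝ, 0 < C ∧ 0 < c ∧
      ∀ (n N s m : ℕ) (V : Fin N → Submodule ℝ (EuclideanSpace ℝ (Fin n))),
        (∀ i, Module.finrank ℝ (V i) ≤ s) →
        ∀ α : ℝ, α ∈ Set.Ioo (0 : ℝ) 1 →
          (m : ℝ) ≥ C * (Real.log N + s) / α ^ 2 →
          ENNReal.ofReal (1 - Real.exp (-c * α ^ 2 * m)) ≤
            gaussMatrix m n {A |
              ∀ x₁ ∈ ⋃ i, (V i : Set (EuclideanSpace ℝ (Fin n))),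
                ∀ x₂ ∈ ⋃ i, (V i : Set (EuclideanSpace ℝ (Fin n))),
                  (1 - α) * ‖x₁ - x₂‖ ≤ ‖Matrix.toEuclideanLin (Matrix.of A) (x₁ - x₂)‖} := by
  refine ⟨4096, 1/256, by norm_num, by norm_num, ?_⟩
  intro n N s m V hV α ⟨hα0, hα1⟩ hm
  set S := {A : Fin m → Fin n → ℝ |
              ∀ x₁ ∈ ⋃ i, (V i : Set (EuclideanSpace ℝ (Fin n))),
                ∀ x₂ ∈ ⋃ i, (V i : Set (EuclideanSpace ℝ (Fin n))),
                  (1 - α) * ‖x₁ - x₂‖ ≤ ‖Matrix.toEuclideanLin (Matrix.of A) (x₁ - x₂)‖} with hS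
  have hcompl : gaussMatrix m n Sᶜ ≤ ENNReal.ofReal (Real.exp (-(1/256) * α ^ 2 * m)) →
      ENNReal.ofReal (1 - Real.exp (-(1/256) * α ^ 2 * m)) ≤ gaussMatrix m n S := by
    intro h
    rw [ENNReal.ofReal_sub _ (Real.exp_pos _).le, ENNReal.ofReal_one, tsub_le_iff_right]
    calc (1 : ENNReal) = gaussMatrix m n Set.univ := measure_univ.symm
      _ = gaussMatrix m n (S ∪ Sᶜ) := by rw [Set.union_compl_self]
      _ ≤ gaussMatrix m n S + gaussMatrix m n Sᶜ := measure_union_le _ _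
      _ ≤ _ := by gcongr
  apply hcompl
  have hsub : Sᶜ ⊆ ⋃ p : Fin N × Fin N, {A | ∃ x ∈ V p.1 ⊔ V p.2,
      ‖Matrix.toEuclideanLin (Matrix.of A) x‖^2 < (1 - α) * ‖x‖^2} := by
    intro A hA
    simp only [hS, Set.mem_compl_iff, Set.mem_ofPred_eq, Set.mem_iUnion, not_forall, not_le,
      SetLike.mem_coe] at hA
    obtain ⟨x, ⟨i, hx⟩, y, ⟨j, hy⟩, hlt⟩ := hA
    refine Set.mem_iUnion.2 ⟨(i, j), x - y, Submodule.sub_mem _ (Submodule.mem_sup_left hx) (Submodule.mem_sup_right hy), ?_⟩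
    have h1 := norm_nonneg (Matrix.toEuclideanLin (Matrix.of A) (x - y))
    have h2 : ‖Matrix.toEuclideanLin (Matrix.of A) (x - y)‖^2 < ((1 - α) * ‖x - y‖)^2 :=
      pow_lt_pow_left₀ hlt h1 two_ne_zero
    have h3 : (1 - α)^2 ≤ 1 - α := by nlinarith
    have h4 := mul_le_mul_of_nonneg_right h3 (sq_nonneg ‖x - y‖)
    rw [mul_pow] at h2
    linarith
  rcases Nat.eq_zero_or_pos N with hN | hN
  · subst hN
    have : Sᶜ = ∅ := Set.subset_empty_iff.1 (hsub.trans (by simp))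
    rw [this]; simp
  rcases Nat.eq_zero_or_pos s with hs | hs
  · have hbot : ∀ i, V i = ⊥ := fun i => Submodule.finrank_eq_zero.1 (by have := hV i; omega)
    have : Sᶜ = ∅ := Set.subset_empty_iff.1 (hsub.trans (by
      intro A hA
      simp [hbot] at hA))
    rw [this]; simp
  have hN1 : (1:ℝ) ≤ N := by exact_mod_cast hN
  have hs1 : (1:ℝ) ≤ s := by exact_mod_cast hs
  have hlog : 0 ≤ Real.log N := Real.log_nonneg hN1
  have hα2 : 0 < α^2 := by positivity
  have hm' : 4096 * (Real.log N + s) ≤ α^2 * m := by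
    rw [ge_iff_le, div_le_iff₀ hα2] at hm; linarith
  have hmpos : 0 < m := by
    rcases Nat.eq_zero_or_pos m with h | h
    · subst h; simp at hm'; linarith
    · exact h
  refine (measure_mono hsub).trans ((measure_iUnion_fintype_le _ _).trans ?_)
  have hp : ∀ p : Fin N × Fin N, gaussMatrix m n {A | ∃ x ∈ V p.1 ⊔ V p.2,
      ‖Matrix.toEuclideanLin (Matrix.of A) x‖^2 < (1 - α) * ‖x‖^2} ≤
      ENNReal.ofReal (4 * 25 ^ (2 * s) * Real.exp (-(α^2 * m / 128))) := by
    intro p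
    refine sr_sub m n (2 * s) hmpos _ ?_ α hα0 hα1
    have := Submodule.finrank_add_le_finrank_add_finrank (V p.1) (V p.2)
    have h1 := hV p.1
    have h2 := hV p.2
    omega
  refine (Finset.sum_le_sum fun p _ => hp p).trans ?_
  rw [Finset.sum_const, Finset.card_univ, Fintype.card_prod, Fintype.card_fin, nsmul_eq_mul,
    ← ENNReal.ofReal_natCast, ← ENNReal.ofReal_mul (by positivity)]
  apply ENNReal.ofReal_le_ofReal
  have hNe : (N:ℝ) = Real.exp (Real.log N) := (Real.exp_log (by linarith)).symm
  have he : (2:ℝ) ≤ Real.exp 1 := by have := Real.add_one_le_exp (1:ℝ); linarith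
  have h4 : (4:ℝ) ≤ Real.exp (2 * s) := by
    calc (4:ℝ) = 2^2 := by norm_num
      _ ≤ (Real.exp 1)^2 := by gcongr
      _ = Real.exp 2 := by rw [← Real.exp_nat_mul]; norm_num
      _ ≤ _ := Real.exp_le_exp.2 (by linarith)
  have h25 : (25:ℝ)^(2*s) ≤ Real.exp (10 * s) := by
    calc (25:ℝ)^(2*s) ≤ (2^5)^(2*s) := by gcongr; norm_num
      _ ≤ ((Real.exp 1)^5)^(2*s) := by gcongr
      _ = _ := by rw [← pow_mul, ← Real.exp_nat_mul]; congr 1; push_cast; ring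
  calc ((N * N : ℕ) : ℝ) * (4 * 25 ^ (2 * s) * Real.exp (-(α^2 * m / 128)))
      ≤ (Real.exp (Real.log N) * Real.exp (Real.log N)) * (Real.exp (2 * s) * Real.exp (10 * s) * Real.exp (-(α^2 * m / 128))) := by
        rw [← hNe]; push_cast; gcongr
    _ = Real.exp (2 * Real.log N + 12 * s - α^2 * m / 128) := by
        simp only [← Real.exp_add]; congr 1; ring
    _ ≤ _ := Real.exp_le_exp.2 (by linarith)
end
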